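/- For all α, β > -1, all t > 0 and all θ, φ ∈ [0,π], the Jacobi-Poisson type kernel 𝓗_t^{α,β}(θ,φ) admits the integral representation 𝓗_t^{α,β}(θ,φ) = 4 ∫∫_{(0,1]×(0,1]} [Ψ_E^{α,β}(t,θ,φ,u,v) − Ψ_E^{α,β}(t,θ,φ,u,1) − Ψ_E^{α,β}(t,θ,φ,1,v) + Ψ_E^{α,β}(t,θ,φ,1,1)] dΠ_α(u) dΠ_β(v) + 2 ∫_{(0,1]} [Ψ_E^{α,β}(t,θ,φ,u,1) − Ψ_E^{α,β}(t,θ,φ,1,1)] dΠ_α(u) + 2 ∫_{(0,1]} [Ψ_E^{α,β}(t,θ,φ,1,v) − Ψ_E^{α,β}(t,θ,φ,1,1)] dΠ_β(v) + Ψ_E^{α,β}(t,θ,φ,1,1), where all the integrals converge absolutely (the integrands vanish at least to first order in (1−u) and in (1−v) as u → 1 and v → 1). -/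

import Mathlib

open MeasureTheory Real Set
open scoped ENNReal Classical

noncomputable def cab (α β : ℝ) : ℝ :=
  Real.Gamma (α + β + 2) / (2 ^ (α + β + 1) * Real.Gamma (α + 1) * Real.Gamma (β + 1))

noncomputable def F4 (a₁ a₂ b₁ b₂ x y : ℝ) : ℝ :=
  ∑' p : ℕ × ℕ,
    (Polynomial.eval a₁ (ascPochhammer ℝ (p.1 + p.2)) *
      Polynomial.eval a₂ (ascPochhammer ℝ (p.1 + p.2))) /
    (Polynomial.eval b₁ (ascPochhammer ℝ p.1) * Polynomial.eval b₂ (ascPochhammer ℝ p.2) *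
      (Nat.factorial p.1) * (Nat.factorial p.2)) * x ^ p.1 * y ^ p.2

noncomputable def Hker (α β t θ φ : ℝ) : ℝ :=
  cab α β * Real.sinh (t / 2) / Real.cosh (t / 2) ^ (α + β + 2) *
    F4 ((α + β + 2) / 2) ((α + β + 3) / 2) (α + 1) (β + 1)
      ((Real.sin (θ / 2) * Real.sin (φ / 2) / Real.cosh (t / 2)) ^ 2)
      ((Real.cos (θ / 2) * Real.cos (φ / 2) / Real.cosh (t / 2)) ^ 2)

noncomputable def qf (θ φ u v : ℝ) : ℝ :=
  1 - u * Real.sin (θ / 2) * Real.sin (φ / 2) - v * Real.cos (θ / 2) * Real.cos (φ / 2)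

noncomputable def Psi (α β t θ φ u v : ℝ) : ℝ :=
  cab α β * Real.sinh (t / 2) / (Real.cosh (t / 2) - 1 + qf θ φ u v) ^ (α + β + 2)

noncomputable def PsiE (α β t θ φ u v : ℝ) : ℝ :=
  (Psi α β t θ φ u v + Psi α β t θ φ (-u) v + Psi α β t θ φ u (-v) +
    Psi α β t θ φ (-u) (-v)) / 4

noncomputable def PiMeas (ν : ℝ) : Measure ℝ :=
  if ν = -(1/2) then (2⁻¹ : ℝ≥0∞) • (Measure.dirac (-1) + Measure.dirac 1)
  else (volume.restrict (Icc (-1 : ℝ) 1)).withDensity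
    (fun u => ENNReal.ofReal
      (Real.Gamma (ν + 1) / (Real.sqrt π * Real.Gamma (ν + 1/2)) * (1 - u ^ 2) ^ (ν - 1/2)))

noncomputable def PiFun (γ u : ℝ) : ℝ :=
  Real.Gamma (γ + 1) / (Real.sqrt π * Real.Gamma (γ + 1/2)) *
    ∫ w in (0 : ℝ)..u, (1 - w ^ 2) ^ (γ - 1/2)

noncomputable def PiInt (ν : ℝ) (S : Set ℝ) (f : ℝ → ℝ) : ℝ :=
  if ν = -(1/2) then
    ((if (-1 : ℝ) ∈ S then f (-1) else 0) + (if (1 : ℝ) ∈ S then f 1 else 0)) / 2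
  else ∫ u in S, f u *
    (Real.Gamma (ν + 1) / (Real.sqrt π * Real.Gamma (ν + 1/2)) * (1 - u ^ 2) ^ (ν - 1/2))

noncomputable def muab (α β : ℝ) : Measure ℝ :=
  (volume.restrict (Icc (0 : ℝ) π)).withDensity
    (fun θ => ENNReal.ofReal (Real.sin (θ / 2) ^ (2 * α + 1) * Real.cos (θ / 2) ^ (2 * β + 1)))

def ballI (θ r : ℝ) : Set ℝ := Ioo (θ - r) (θ + r) ∩ Icc 0 π

theorem hasSum_one_div_one_sub_rpow (a : ℝ) {x : ℝ} (hx : |x| < 1) :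
    HasSum (fun n : ℕ => (ascPochhammer ℝ n).eval a / n.factorial * x ^ n) (1 / (1 - x) ^ a) := by
  have h := (Real.one_div_one_sub_rpow_hasFPowerSeriesOnBall_zero a).hasSum
    (y := x) (by simpa [enorm_eq_nnnorm, ← NNReal.coe_lt_one] using hx)
  have hc (n : ℕ) : Ring.choose (a + n - 1) n = (ascPochhammer ℝ n).eval a / n.factorial := by
    rw [Ring.choose, show a + n - 1 - n + 1 = a by ring, eq_div_iff (by positivity), mul_comm,
      ← nsmul_eq_mul, Ring.factorial_nsmul_multichoose_eq_ascPochhammer,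
      Polynomial.ascPochhammer_smeval_eq_eval]
  simpa [hc, FormalMultilinearSeries.ofScalars] using h

theorem ascPochhammer_eval_nonneg {a : ℝ} (ha : 0 < a) (n : ℕ) :
    0 ≤ (ascPochhammer ℝ n).eval a := (ascPochhammer_pos n a ha).le

/-- The coefficients of the Taylor expansion of `(1 - X - Y) ^ (-a)`. -/
noncomputable def doubleBinomialCoeff (a : ℝ) (p : ℕ × ℕ) : ℝ :=
  (ascPochhammer ℝ (p.1 + p.2)).eval a / (p.1.factorial * p.2.factorial)

theorem doubleBinomialCoeff_nonneg {a : ℝ} (ha : 0 < a) (p : ℕ × ℕ) :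
    0 ≤ doubleBinomialCoeff a p :=
  div_nonneg (ascPochhammer_eval_nonneg ha _) (by positivity)

theorem sum_antidiagonal_doubleBinomialCoeff (a X Y : ℝ) (n : ℕ) :
    ∑ p ∈ Finset.HasAntidiagonal.antidiagonal n, doubleBinomialCoeff a p * X ^ p.1 * Y ^ p.2 =
      (ascPochhammer ℝ n).eval a / n.factorial * (X + Y) ^ n := by
  rw [(Commute.all X Y).add_pow', Finset.mul_sum]
  refine Finset.sum_congr rfl fun p hp => ?_
  rw [Finset.HasAntidiagonal.mem_antidiagonal] at hp
  subst hp
  rw [nsmul_eq_mul, Nat.cast_add_choose, doubleBinomialCoeff]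
  field_simp

theorem summable_doubleBinomialCoeff {a X Y : ℝ} (ha : 0 < a) (hX : 0 ≤ X) (hY : 0 ≤ Y)
    (hXY : X + Y < 1) :
    Summable fun p : ℕ × ℕ => doubleBinomialCoeff a p * X ^ p.1 * Y ^ p.2 := by
  rw [← Finset.HasAntidiagonal.sigmaAntidiagonalEquivProd.summable_iff,
    summable_sigma_of_nonneg]
  swap
  · exact fun p => mul_nonneg (mul_nonneg (doubleBinomialCoeff_nonneg ha _) (pow_nonneg hX _))
      (pow_nonneg hY _)
  refine ⟨fun n => (hasSum_fintype _).summable, ?_⟩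
  have h := (hasSum_one_div_one_sub_rpow a (x := X + Y)
    (by rwa [abs_of_nonneg (by positivity)])).summable
  refine h.congr fun n => ?_
  rw [← sum_antidiagonal_doubleBinomialCoeff, tsum_fintype]
  exact (Finset.sum_coe_sort (Finset.HasAntidiagonal.antidiagonal n)
    fun p => doubleBinomialCoeff a p * X ^ p.1 * Y ^ p.2).symm

theorem hasSum_doubleBinomialCoeff {a X Y : ℝ} (ha : 0 < a) (hXY : |X| + |Y| < 1) :
    HasSum (fun p : ℕ × ℕ => doubleBinomialCoeff a p * X ^ p.1 * Y ^ p.2)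
      (1 / (1 - X - Y) ^ a) := by
  have hs : Summable fun p : ℕ × ℕ => doubleBinomialCoeff a p * X ^ p.1 * Y ^ p.2 := by
    refine Summable.of_norm ?_
    simpa [abs_mul, abs_of_nonneg (doubleBinomialCoeff_nonneg ha _)] using
      summable_doubleBinomialCoeff ha (abs_nonneg X) (abs_nonneg Y) hXY
  have h1 := (Finset.HasAntidiagonal.sigmaAntidiagonalEquivProd.hasSum_iff.2 hs.hasSum).sigma
    fun n => hasSum_fintype _
  have h2 := hasSum_one_div_one_sub_rpow a (x := X + Y) ((abs_add_le X Y).trans_lt hXY)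
  rw [show 1 - X - Y = 1 - (X + Y) by ring, ← h1.unique (h2.congr_fun ?_)]
  · exact hs.hasSum
  · intro n
    rw [← sum_antidiagonal_doubleBinomialCoeff]
    exact (Finset.sum_coe_sort (Finset.HasAntidiagonal.antidiagonal n)
      fun p => doubleBinomialCoeff a p * X ^ p.1 * Y ^ p.2)

theorem hasSum_doubleBinomialCoeff_even {a X Y : ℝ} (ha : 0 < a) (hXY : |X| + |Y| < 1) :
    HasSum (fun p : ℕ × ℕ => doubleBinomialCoeff a (2 * p.1, 2 * p.2) *
        X ^ (2 * p.1) * Y ^ (2 * p.2))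
      ((1 / (1 - X - Y) ^ a + 1 / (1 + X - Y) ^ a + 1 / (1 - X + Y) ^ a +
        1 / (1 + X + Y) ^ a) / 4) := by
  have h := (((hasSum_doubleBinomialCoeff ha hXY).add
    (hasSum_doubleBinomialCoeff (X := -X) (Y := Y) ha (by simpa))).add
    (hasSum_doubleBinomialCoeff (X := X) (Y := -Y) ha (by simpa))).add
    (hasSum_doubleBinomialCoeff (X := -X) (Y := -Y) ha (by simpa)) |>.div_const 4
  simp only [sub_neg_eq_add] at h
  have hinj : Function.Injective fun p : ℕ × ℕ => (2 * p.1, 2 * p.2) := by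
    rintro ⟨a, b⟩ ⟨c, d⟩ h
    simp only [Prod.mk.injEq] at h ⊢
    omega
  rw [← hinj.hasSum_iff] at h
  · refine h.congr_fun fun p => ?_
    simp only [Function.comp, (even_two_mul _).neg_pow]
    ring
  · rintro ⟨i, j⟩ hij
    rcases Nat.even_or_odd i with hi | hi
    · rcases Nat.even_or_odd j with hj | hj
      · obtain ⟨m, rfl⟩ := hi
        obtain ⟨n, rfl⟩ := hj
        exact absurd ⟨(m, n), by simp [two_mul]⟩ hij
      · simp only [hi.neg_pow, hj.neg_pow]
        ring
    · simp only [hi.neg_pow]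
      ring

theorem natCast_add_one_le_div_mul_pow {r : ℝ} (hr : 1 < r) (hr2 : r ≤ 2) (n : ℕ) :
    (n + 1 : ℝ) ≤ (r - 1)⁻¹ * r ^ n := by
  have h := one_add_mul_le_pow (a := r - 1) (by linarith) n
  rw [add_sub_cancel] at h
  rw [le_inv_mul_iff₀ (by linarith)]
  nlinarith

theorem summable_doubleBinomialCoeff_even_mul {a X Y : ℝ} (ha : 0 < a) (hX : 0 ≤ X) (hY : 0 ≤ Y)
    (hXY : X + Y < 1) :
    Summable fun p : ℕ × ℕ => doubleBinomialCoeff a (2 * p.1, 2 * p.2) *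
      X ^ (2 * p.1) * Y ^ (2 * p.2) * ((p.1 + 1) * (p.2 + 1)) := by
  obtain ⟨r, hr1, hr2, hr⟩ : ∃ r : ℝ, 1 < r ∧ r ≤ 2 ∧ r * X + r * Y < 1 := by
    refine ⟨2 / (1 + (X + Y)), ?_, ?_, ?_⟩
    · rw [one_lt_div] <;> linarith
    · rw [div_le_iff₀] <;> linarith
    · rw [← mul_add, div_mul_eq_mul_div, div_lt_one] <;> linarith
  have hs := (hasSum_doubleBinomialCoeff_even (X := r * X) (Y := r * Y) ha
    (by rwa [abs_of_nonneg (by positivity), abs_of_nonneg (by positivity)])).summable.mul_left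
      ((r - 1)⁻¹ * (r - 1)⁻¹)
  have hc := fun p => doubleBinomialCoeff_nonneg ha p
  refine hs.of_nonneg_of_le (fun p => ?_) (fun p => ?_)
  · have := hc (2 * p.1, 2 * p.2)
    positivity
  · have h1 (n : ℕ) : (n + 1 : ℝ) ≤ (r - 1)⁻¹ * r ^ (2 * n) :=
      (natCast_add_one_le_div_mul_pow hr1 hr2 n).trans (by
        have : 0 < r - 1 := by linarith
        gcongr
        · exact hr1.le
        · omega)
    calc _ ≤ doubleBinomialCoeff a (2 * p.1, 2 * p.2) * X ^ (2 * p.1) * Y ^ (2 * p.2) *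
          (((r - 1)⁻¹ * r ^ (2 * p.1)) * ((r - 1)⁻¹ * r ^ (2 * p.2))) := by
          have := hc (2 * p.1, 2 * p.2)
          have : 0 < r - 1 := by linarith
          gcongr
          · exact h1 _
          · exact h1 _
      _ = _ := by ring

theorem ascPochhammer_eval_two_mul (a : ℝ) (n : ℕ) :
    (ascPochhammer ℝ (2 * n)).eval a =
      4 ^ n * ((ascPochhammer ℝ n).eval (a / 2) * (ascPochhammer ℝ n).eval ((a + 1) / 2)) := by
  induction n with
  | zero => simp
  | succ n ih =>
    rw [mul_add, mul_one, ascPochhammer_succ_eval, ascPochhammer_succ_eval, ih,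
      ascPochhammer_succ_eval, ascPochhammer_succ_eval]
    push_cast
    ring

theorem factorial_two_mul_eq (n : ℕ) :
    ((2 * n).factorial : ℝ) = 4 ^ n * (n.factorial * (ascPochhammer ℝ n).eval (1 / 2)) := by
  induction n with
  | zero => simp
  | succ n ih =>
    rw [mul_add, mul_one, Nat.factorial_succ, Nat.factorial_succ, Nat.factorial_succ,
      ascPochhammer_succ_eval]
    push_cast
    rw [ih]
    ring

/-- For functions vanishing at `1`, the atomic case of `PiInt` needs no separate treatment. -/
theorem PiInt_eq_setIntegral {ν : ℝ} {f : ℝ → ℝ} (h : f 1 = 0) :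
    PiInt ν (Ioc 0 1) f = ∫ u in Ioc 0 1, f u *
      (Gamma (ν + 1) / (√π * Gamma (ν + 1 / 2)) * (1 - u ^ 2) ^ (ν - 1 / 2)) := by
  have h0 : (-1 : ℝ) ∉ Ioc (0 : ℝ) 1 := by norm_num
  have h1 : (1 : ℝ) ∈ Ioc (0 : ℝ) 1 := by norm_num
  by_cases hν : ν = -(1 / 2)
  · simp only [PiInt, if_pos hν, if_neg h0, if_pos h1, h]
    rw [hν, neg_add_cancel, Gamma_zero]
    simp
  · simp only [PiInt, if_neg hν]

theorem integrableOn_one_sub_sq_rpow {a : ℝ} (ha : -1 < a) :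
    IntegrableOn (fun u : ℝ => (1 - u ^ 2) ^ a) (Ioc 0 1) := by
  have h1 : IntervalIntegrable (fun u : ℝ => (1 - u) ^ a) volume 0 1 := by
    simpa using
      ((intervalIntegral.intervalIntegrable_rpow' ha (a := 0) (b := 1)).comp_sub_left 1).symm
  have h2 : ContinuousOn (fun u : ℝ => (1 + u) ^ a) (uIcc 0 1) := by
    refine ContinuousOn.rpow_const (by fun_prop) fun u hu => Or.inl ?_
    rw [uIcc_of_le zero_le_one] at hu
    linarith [hu.1]
  rw [← intervalIntegrable_iff_integrableOn_Ioc_of_le zero_le_one]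
  refine (h1.mul_continuousOn h2).congr ?_
  intro u hu
  rw [uIoc_of_le zero_le_one] at hu
  simp only
  rw [← mul_rpow (by linarith [hu.2]) (by linarith [hu.1])]
  ring_nf

theorem integral_pow_mul_one_sub_sq_rpow {a : ℝ} (ha : -1 < a) (n : ℕ) :
    2 * ∫ u in Ioc (0 : ℝ) 1, u ^ (2 * n) * (1 - u ^ 2) ^ a =
      Gamma (n + 1 / 2) * Gamma (a + 1) / Gamma (n + 1 / 2 + (a + 1)) := by
  have hB := ProbabilityTheory.beta_eq_betaIntegralReal (n + 1 / 2) (a + 1) (by positivity)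
    (by linarith)
  rw [ProbabilityTheory.beta] at hB
  rw [hB]
  have h2 := integral_comp_rpow_Ioi_of_pos (p := 2) (g := indicator (Ioc (0 : ℝ) 1)
    fun x => x ^ ((n : ℝ) - 1 / 2) * (1 - x) ^ a) two_pos
  rw [setIntegral_indicator measurableSet_Ioc,
    inter_eq_right.2 (fun x hx => hx.1)] at h2
  have h3 : (∫ x in Ioc (0 : ℝ) 1, x ^ ((n : ℝ) - 1 / 2) * (1 - x) ^ a) =
      (Complex.betaIntegral ((n + 1 / 2 : ℝ) : ℂ) ((a + 1 : ℝ) : ℂ)).re := by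
    rw [Complex.betaIntegral, intervalIntegral.integral_of_le zero_le_one,
      ← Complex.ofReal_re (∫ x in Ioc (0 : ℝ) 1, x ^ ((n : ℝ) - 1 / 2) * (1 - x) ^ a),
      ← integral_complex_ofReal]
    congr 1
    refine setIntegral_congr_fun measurableSet_Ioc fun x hx => ?_
    simp only [Complex.ofReal_mul]
    rw [Complex.ofReal_cpow hx.1.le, Complex.ofReal_cpow (by linarith [hx.2])]
    push_cast
    ring_nf
  have h4 := setIntegral_indicator (μ := volume) (s := Ioi (0 : ℝ)) (t := Ioc (0 : ℝ) 1)
    (f := fun u => 2 * (u ^ (2 * n) * (1 - u ^ 2) ^ a)) measurableSet_Ioc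
  rw [inter_eq_right.2 Ioc_subset_Ioi_self] at h4
  rw [← h3, ← h2, ← integral_const_mul, ← h4]
  refine setIntegral_congr_fun measurableSet_Ioi fun x (hx : 0 < x) => ?_
  have e : x ^ (2 : ℝ) = x ^ 2 := by norm_cast
  by_cases h : x ≤ 1
  · have h' : x ^ 2 ≤ 1 := by nlinarith
    simp only [indicator, mem_Ioc, hx, h, e, h', smul_eq_mul, and_true, if_true,
      pow_pos hx 2]
    have e1 : x ^ ((2 : ℝ) - 1) = x := by norm_num
    have e2 : x * (x ^ 2) ^ ((n : ℝ) - 1 / 2) = x ^ (2 * n) := by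
      rw [← e, ← rpow_mul hx.le, mul_comm, ← rpow_add_one hx.ne', ← rpow_natCast]
      · congr 1
        push_cast
        ring
    rw [e1, ← e2]
    ring
  · have h' : ¬ x ^ 2 ≤ 1 := by nlinarith
    simp [indicator, h, e, h']

theorem abs_pow_sub_one_le {u : ℝ} (hu : u ∈ Ioc (0 : ℝ) 1) (n : ℕ) :
    |u ^ (2 * n) - 1| ≤ n * (1 - u ^ 2) := by
  have h1 : u ^ (2 * n) ≤ 1 := pow_le_one₀ hu.1.le hu.2
  have h2 := one_add_mul_le_pow (a := u ^ 2 - 1) (by nlinarith [sq_nonneg u]) n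
  rw [add_sub_cancel, ← pow_mul] at h2
  rw [abs_sub_comm, abs_of_nonneg (by linarith)]
  linarith

/-- The moments of the (regularized) measure `dΠ_ν`. -/
noncomputable def PiMoment (ν : ℝ) (n : ℕ) : ℝ :=
  (ascPochhammer ℝ n).eval (1 / 2) / (ascPochhammer ℝ n).eval (ν + 1)

theorem norm_pow_sub_one_mul_weight_le (ν K : ℝ) {u : ℝ} (hu : u ∈ Ioc (0 : ℝ) 1) (n : ℕ) :
    ‖(u ^ (2 * n) - 1) * (K * (1 - u ^ 2) ^ (ν - 1 / 2))‖ ≤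
      n * (|K| * (1 - u ^ 2) ^ (ν + 1 / 2)) := by
  rcases hu.2.eq_or_lt with rfl | h
  · simp only [one_pow, sub_self, zero_mul, norm_zero]
    positivity
  · have hp : 0 < 1 - u ^ 2 := by nlinarith [hu.1]
    rw [show ν + 1 / 2 = ν - 1 / 2 + 1 by ring, rpow_add_one hp.ne', norm_mul, norm_mul,
      norm_of_nonneg (rpow_nonneg hp.le _), norm_eq_abs, norm_eq_abs]
    have := abs_pow_sub_one_le hu n
    have hr := rpow_nonneg hp.le (ν - 1 / 2)
    calc _ ≤ n * (1 - u ^ 2) * (|K| * (1 - u ^ 2) ^ (ν - 1 / 2)) := by gcongr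
      _ = _ := by ring

theorem integrableOn_pow_sub_one_mul_weight {ν : ℝ} (hν : -1 < ν) (K : ℝ) (n : ℕ) :
    IntegrableOn (fun u => (u ^ (2 * n) - 1) * (K * (1 - u ^ 2) ^ (ν - 1 / 2))) (Ioc 0 1) := by
  refine (((integrableOn_one_sub_sq_rpow (a := ν + 1 / 2) (by linarith)).const_mul |K|).const_mul
    (n : ℝ)).mono' (by fun_prop) ?_
  filter_upwards [ae_restrict_mem measurableSet_Ioc] with u hu
  exact norm_pow_sub_one_mul_weight_le ν K hu n

theorem integral_norm_pow_sub_one_mul_weight_le {ν : ℝ} (hν : -1 < ν) (K : ℝ) (n : ℕ) :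
    ∫ u in Ioc (0 : ℝ) 1, ‖(u ^ (2 * n) - 1) * (K * (1 - u ^ 2) ^ (ν - 1 / 2))‖ ≤
      n * (∫ u in Ioc (0 : ℝ) 1, |K| * (1 - u ^ 2) ^ (ν + 1 / 2)) := by
  rw [← integral_const_mul]
  exact setIntegral_mono_on (integrableOn_pow_sub_one_mul_weight hν K n).norm
    (((integrableOn_one_sub_sq_rpow (a := ν + 1 / 2) (by linarith)).const_mul |K|).const_mul
    (n : ℝ)) measurableSet_Ioc fun u hu => norm_pow_sub_one_mul_weight_le ν K hu n

theorem PiMoment_eq_integral {ν : ℝ} (hν : -1 < ν) (n : ℕ) :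
    2 * ∫ u in Ioc (0 : ℝ) 1, (u ^ (2 * n) - 1) *
      (Gamma (ν + 1) / (√π * Gamma (ν + 1 / 2)) * (1 - u ^ 2) ^ (ν - 1 / 2)) =
      PiMoment ν n - 1 := by
  set K := Gamma (ν + 1) / (√π * Gamma (ν + 1 / 2)) with hK
  have hK' : K * Gamma (ν + 1 / 2 + 1) = (ν + 1 / 2) * Gamma (ν + 1) / √π := by
    by_cases h : ν + 1 / 2 = 0
    · rw [hK, h, Gamma_zero]
      simp
    · have : Gamma (ν + 1 / 2) ≠ 0 := by
        refine Gamma_ne_zero fun m hm => h ?_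
        rcases m with _ | m
        · simpa using hm
        · push_cast at hm
          have : (0 : ℝ) ≤ m := by positivity
          linarith
      have : 0 < √π := by positivity
      rw [Gamma_add_one h, div_mul_eq_mul_div, div_eq_div_iff (by positivity) (by positivity)]
      ring
  have hg (k : ℕ) : Gamma (k + 1 / 2) = (ascPochhammer ℝ k).eval (1 / 2) * √π := by
    induction k with
    | zero => simpa using Gamma_one_half_eq
    | succ k ih =>
      rw [ascPochhammer_succ_eval, Nat.cast_succ, show (k : ℝ) + 1 + 1 / 2 = k + 1 / 2 + 1 by ring,
        Gamma_add_one (by positivity), ih]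
      ring
  have hg' (k : ℕ) : Gamma (ν + 1 + k) = (ascPochhammer ℝ k).eval (ν + 1) * Gamma (ν + 1) := by
    induction k with
    | zero => simp
    | succ k ih =>
      have : (0 : ℝ) ≤ k := by positivity
      rw [ascPochhammer_succ_eval, Nat.cast_succ, ← add_assoc, Gamma_add_one (by linarith), ih]
      ring
  induction n with
  | zero => simp [PiMoment]
  | succ n ih =>
    have key : (∫ u in Ioc (0 : ℝ) 1, (u ^ (2 * n) - 1) * (K * (1 - u ^ 2) ^ (ν - 1 / 2))) -
        (∫ u in Ioc (0 : ℝ) 1, (u ^ (2 * (n + 1)) - 1) * (K * (1 - u ^ 2) ^ (ν - 1 / 2))) =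
        K * ∫ u in Ioc (0 : ℝ) 1, u ^ (2 * n) * (1 - u ^ 2) ^ (ν + 1 / 2) := by
      rw [← integral_sub (integrableOn_pow_sub_one_mul_weight hν K n)
        (integrableOn_pow_sub_one_mul_weight hν K (n + 1)), ← integral_const_mul,
        integral_Ioc_eq_integral_Ioo, integral_Ioc_eq_integral_Ioo]
      refine setIntegral_congr_fun measurableSet_Ioo fun u hu => ?_
      have hp : 0 < 1 - u ^ 2 := by nlinarith [hu.1, hu.2]
      rw [show ν + 1 / 2 = ν - 1 / 2 + 1 by ring, rpow_add_one hp.ne']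
      ring
    have hb := integral_pow_mul_one_sub_sq_rpow (a := ν + 1 / 2) (by linarith) n
    have hn : (0 : ℝ) ≤ n := by positivity
    rw [show (n : ℝ) + 1 / 2 + (ν + 1 / 2 + 1) = ν + 1 + (n + 1 : ℕ) by push_cast; ring, hg', hg]
      at hb
    have hP := ascPochhammer_pos n (ν + 1) (by linarith)
    have hP' := ascPochhammer_pos (n + 1) (ν + 1) (by linarith)
    have hG := Gamma_pos_of_pos (show 0 < ν + 1 by linarith)
    have hs : 0 < √π := by positivity
    have hstep : K * (2 * ∫ u in Ioc (0 : ℝ) 1, u ^ (2 * n) * (1 - u ^ 2) ^ (ν + 1 / 2)) =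
        PiMoment ν n - PiMoment ν (n + 1) := by
      rw [hb, mul_div_assoc', ← mul_assoc, mul_right_comm, hK', PiMoment, PiMoment]
      rw [ascPochhammer_succ_eval] at hP' ⊢
      rw [ascPochhammer_succ_eval]
      have : 0 < ν + 1 + n := by linarith
      field_simp
      ring
    linarith [hstep, key, ih]

theorem hasSum_PiInt {ι : Type*} [Countable ι] {ν : ℝ} (hν : -1 < ν) {b : ι → ℝ} {e : ι → ℕ}
    {f : ℝ → ℝ} (hb : Summable fun i => |b i| * (e i + 1))
    (hf : ∀ u ∈ Ioc (0 : ℝ) 1, HasSum (fun i => b i * (u ^ (2 * e i) - 1)) (f u)) :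
    HasSum (fun i => b i * (PiMoment ν (e i) - 1)) (2 * PiInt ν (Ioc 0 1) f) := by
  have h1 : f 1 = 0 := (hf 1 (by simp)).unique (by simp [hasSum_zero])
  rw [PiInt_eq_setIntegral h1]
  set K := Gamma (ν + 1) / (√π * Gamma (ν + 1 / 2))
  have hI := integrableOn_pow_sub_one_mul_weight hν K
  have hle := integral_norm_pow_sub_one_mul_weight_le hν K
  set C := ∫ u in Ioc (0 : ℝ) 1, |K| * (1 - u ^ 2) ^ (ν + 1 / 2)
  have hC : 0 ≤ C := by simpa using (integral_nonneg fun _ => norm_nonneg _).trans (hle 1)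
  have h := hasSum_integral_of_summable_integral_norm (μ := volume.restrict (Ioc (0 : ℝ) 1))
    (F := fun i u => b i * ((u ^ (2 * e i) - 1) * (K * (1 - u ^ 2) ^ (ν - 1 / 2))))
    (fun i => (hI (e i)).const_mul (b i)) ?_
  · have h' := h.mul_left 2
    convert! h' using 1
    · funext i
      rw [integral_const_mul, mul_left_comm, PiMoment_eq_integral hν]
    · congr 1
      refine setIntegral_congr_fun measurableSet_Ioc fun u hu => ?_
      simpa only [mul_assoc] using
        ((hf u hu).mul_right (K * (1 - u ^ 2) ^ (ν - 1 / 2))).tsum_eq.symm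
  · refine (hb.mul_right C).of_nonneg_of_le (fun i => integral_nonneg fun _ => norm_nonneg _)
      fun i => ?_
    simp_rw [norm_mul (b i)]
    rw [integral_const_mul, norm_eq_abs, mul_assoc]
    gcongr
    exact (hle (e i)).trans (by gcongr; linarith)

theorem exists_abs_PiMoment_sub_one_le {ν : ℝ} (hν : -1 < ν) :
    ∃ C, 0 ≤ C ∧ ∀ n : ℕ, |PiMoment ν n - 1| ≤ C * (n + 1) := by
  set K := Gamma (ν + 1) / (√π * Gamma (ν + 1 / 2))
  have hle := integral_norm_pow_sub_one_mul_weight_le hν K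
  set C := ∫ u in Ioc (0 : ℝ) 1, |K| * (1 - u ^ 2) ^ (ν + 1 / 2)
  have hC : 0 ≤ C := by simpa using (integral_nonneg fun _ => norm_nonneg _).trans (hle 1)
  refine ⟨2 * C, by positivity, fun n => ?_⟩
  rw [← PiMoment_eq_integral hν, abs_mul, abs_two]
  have := (norm_integral_le_integral_norm _).trans (hle n)
  rw [norm_eq_abs] at this
  nlinarith

theorem PiInt_const_mul (ν : ℝ) (S : Set ℝ) (c : ℝ) (f : ℝ → ℝ) :
    PiInt ν S (fun u => c * f u) = c * PiInt ν S f := by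
  unfold PiInt
  split_ifs
  · ring
  · ring
  · ring
  · ring
  · simp only [mul_assoc, integral_const_mul]

theorem hasSum_PiInt_PiInt {α β : ℝ} (hα : -1 < α) (hβ : -1 < β) {a : ℕ × ℕ → ℝ}
    {E : ℝ → ℝ → ℝ} (ha : Summable fun p => |a p| * ((p.1 + 1) * (p.2 + 1)))
    (hE : ∀ u ∈ Ioc (0 : ℝ) 1, ∀ v ∈ Ioc (0 : ℝ) 1,
      HasSum (fun p => a p * u ^ (2 * p.1) * v ^ (2 * p.2)) (E u v)) :
    HasSum (fun p => a p * PiMoment α p.1 * PiMoment β p.2)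
      (4 * PiInt α (Ioc 0 1) (fun u => PiInt β (Ioc 0 1) fun v =>
          E u v - E u 1 - E 1 v + E 1 1)
        + 2 * PiInt α (Ioc 0 1) (fun u => E u 1 - E 1 1)
        + 2 * PiInt β (Ioc 0 1) (fun v => E 1 v - E 1 1) + E 1 1) := by
  have h1 : (1 : ℝ) ∈ Ioc (0 : ℝ) 1 := by norm_num
  have ha1 : Summable fun p => |a p| * ((p.1 : ℝ) + 1) := by
    refine ha.of_nonneg_of_le (fun p => by positivity) fun p => ?_
    gcongr
    exact le_mul_of_one_le_right (by positivity) (by simp)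
  have ha2 : Summable fun p => |a p| * ((p.2 : ℝ) + 1) := by
    refine ha.of_nonneg_of_le (fun p => by positivity) fun p => ?_
    gcongr
    exact le_mul_of_one_le_left (by positivity) (by simp)
  have hA := hasSum_PiInt hα (f := fun u => E u 1 - E 1 1) ha1 fun u hu => by
    refine ((hE u hu 1 h1).sub (hE 1 h1 1 h1)).congr_fun fun p => ?_
    simp only [one_pow]
    ring
  have hB := hasSum_PiInt hβ (f := fun v => E 1 v - E 1 1) ha2 fun v hv => by
    refine ((hE 1 h1 v hv).sub (hE 1 h1 1 h1)).congr_fun fun p => ?_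
    simp only [one_pow]
    ring
  have hinner (u : ℝ) (hu : u ∈ Ioc (0 : ℝ) 1) :
      HasSum (fun p : ℕ × ℕ => a p * (u ^ (2 * p.1) - 1) * (PiMoment β p.2 - 1))
        (2 * PiInt β (Ioc 0 1) fun v => E u v - E u 1 - E 1 v + E 1 1) := by
    refine hasSum_PiInt hβ (b := fun p : ℕ × ℕ => a p * (u ^ (2 * p.1) - 1)) ?_ fun v hv => ?_
    · refine ha2.of_nonneg_of_le (fun p => by positivity) fun p => ?_
      rw [abs_mul]
      gcongr
      refine mul_le_of_le_one_right (abs_nonneg _) ?_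
      rw [abs_sub_le_iff]
      have := pow_le_one₀ hu.1.le hu.2 (n := 2 * p.1)
      have := pow_nonneg hu.1.le (2 * p.1)
      constructor <;> linarith
    · refine ((((hE u hu v hv).sub (hE u hu 1 h1)).sub (hE 1 h1 v hv)).add
        (hE 1 h1 1 h1)).congr_fun fun p => ?_
      simp only [one_pow]
      ring
  obtain ⟨C, hC, hCb⟩ := exists_abs_PiMoment_sub_one_le hβ
  have hO := hasSum_PiInt hα (b := fun p : ℕ × ℕ => a p * (PiMoment β p.2 - 1))
    (e := Prod.fst) (f := fun u => 2 * PiInt β (Ioc 0 1) fun v => E u v - E u 1 - E 1 v + E 1 1)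
    (by
      refine (ha.mul_left C).of_nonneg_of_le (fun p => by positivity) fun p => ?_
      rw [abs_mul]
      calc _ ≤ |a p| * (C * (p.2 + 1)) * (p.1 + 1) := by
            gcongr
            exact hCb _
        _ = _ := by ring)
    fun u hu => (hinner u hu).congr_fun fun p => by ring
  have hmul : PiInt α (Ioc 0 1) (fun u => 2 * PiInt β (Ioc 0 1) fun v =>
      E u v - E u 1 - E 1 v + E 1 1) = 2 * PiInt α (Ioc 0 1) (fun u => PiInt β (Ioc 0 1) fun v =>
      E u v - E u 1 - E 1 v + E 1 1) := PiInt_const_mul _ _ _ _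
  rw [hmul, ← mul_assoc] at hO
  have h := ((hO.add hA).add hB).add (hE 1 h1 1 h1)
  norm_num only at h
  refine h.congr_fun fun p => ?_
  simp only [one_pow]
  ring

theorem Psi_eq_mul_one_div {α β t θ φ u v : ℝ}
    (h : 0 ≤ 1 - u * (sin (θ / 2) * sin (φ / 2) / cosh (t / 2)) -
      v * (cos (θ / 2) * cos (φ / 2) / cosh (t / 2))) :
    Psi α β t θ φ u v = cab α β * sinh (t / 2) / cosh (t / 2) ^ (α + β + 2) *
      (1 / (1 - u * (sin (θ / 2) * sin (φ / 2) / cosh (t / 2)) -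
        v * (cos (θ / 2) * cos (φ / 2) / cosh (t / 2))) ^ (α + β + 2)) := by
  have hz := cosh_pos (t / 2)
  rw [Psi, div_mul_div_comm, mul_one, ← mul_rpow hz.le h, qf]
  congr 2
  field_simp
  ring

theorem hasSum_PsiE {α β t θ φ u v : ℝ} (hab : 0 < α + β + 2)
    (hs : 0 ≤ sin (θ / 2) * sin (φ / 2) / cosh (t / 2))
    (hc : 0 ≤ cos (θ / 2) * cos (φ / 2) / cosh (t / 2))
    (hsc : sin (θ / 2) * sin (φ / 2) / cosh (t / 2) +
      cos (θ / 2) * cos (φ / 2) / cosh (t / 2) < 1)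
    (hu : u ∈ Ioc (0 : ℝ) 1) (hv : v ∈ Ioc (0 : ℝ) 1) :
    HasSum (fun p : ℕ × ℕ => cab α β * sinh (t / 2) / cosh (t / 2) ^ (α + β + 2) *
      (doubleBinomialCoeff (α + β + 2) (2 * p.1, 2 * p.2) *
        (sin (θ / 2) * sin (φ / 2) / cosh (t / 2)) ^ (2 * p.1) *
        (cos (θ / 2) * cos (φ / 2) / cosh (t / 2)) ^ (2 * p.2)) *
      u ^ (2 * p.1) * v ^ (2 * p.2)) (PsiE α β t θ φ u v) := by
  have hus := mul_le_of_le_one_left hs hu.2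
  have hvc := mul_le_of_le_one_left hc hv.2
  have hus0 := mul_nonneg hu.1.le hs
  have hvc0 := mul_nonneg hv.1.le hc
  have h := (hasSum_doubleBinomialCoeff_even hab
    (X := u * (sin (θ / 2) * sin (φ / 2) / cosh (t / 2)))
    (Y := v * (cos (θ / 2) * cos (φ / 2) / cosh (t / 2)))
    (by rw [abs_of_nonneg hus0, abs_of_nonneg hvc0]; linarith)).mul_left
      (cab α β * sinh (t / 2) / cosh (t / 2) ^ (α + β + 2))
  convert! h using 1
  · funext p
    ring
  · rw [PsiE, Psi_eq_mul_one_div, Psi_eq_mul_one_div, Psi_eq_mul_one_div, Psi_eq_mul_one_div]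
    · simp only [neg_mul, sub_neg_eq_add]
      ring
    all_goals linarith

theorem doubleBinomialCoeff_even_mul_PiMoment (a α β : ℝ) (p : ℕ × ℕ) :
    doubleBinomialCoeff a (2 * p.1, 2 * p.2) * PiMoment α p.1 * PiMoment β p.2 =
      ((ascPochhammer ℝ (p.1 + p.2)).eval (a / 2) *
        (ascPochhammer ℝ (p.1 + p.2)).eval ((a + 1) / 2)) /
      ((ascPochhammer ℝ p.1).eval (α + 1) * (ascPochhammer ℝ p.2).eval (β + 1) *
        p.1.factorial * p.2.factorial) := by
  have h1 := (ascPochhammer_pos p.1 (1 / 2 : ℝ) (by norm_num)).ne'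
  have h2 := (ascPochhammer_pos p.2 (1 / 2 : ℝ) (by norm_num)).ne'
  rw [doubleBinomialCoeff, PiMoment, PiMoment]
  simp only
  rw [← mul_add, ascPochhammer_eval_two_mul, factorial_two_mul_eq, factorial_two_mul_eq, pow_add]
  generalize (ascPochhammer ℝ p.1).eval (1 / 2) = x at *
  generalize (ascPochhammer ℝ p.2).eval (1 / 2) = y at *
  generalize (ascPochhammer ℝ p.1).eval (α + 1) = z
  generalize (ascPochhammer ℝ p.2).eval (β + 1) = w
  rw [div_mul_div_comm, div_mul_div_comm]
  refine Eq.trans ?_ (mul_div_mul_left _ _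
    (show x * y * (4 ^ p.1 * 4 ^ p.2) ≠ 0 by positivity))
  congr 1 <;> ring

theorem jacobi_poisson_kernel_general_representation
    (α β : ℝ) (hα : -1 < α) (hβ : -1 < β) (t : ℝ) (ht : 0 < t)
    (θ φ : ℝ) (hθ : θ ∈ Icc (0 : ℝ) π) (hφ : φ ∈ Icc (0 : ℝ) π) :
    Hker α β t θ φ =
      4 * PiInt α (Ioc 0 1) (fun u => PiInt β (Ioc 0 1) (fun v =>
            PsiE α β t θ φ u v - PsiE α β t θ φ u 1 - PsiE α β t θ φ 1 v +
              PsiE α β t θ φ 1 1))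
      + 2 * PiInt α (Ioc 0 1) (fun u => PsiE α β t θ φ u 1 - PsiE α β t θ φ 1 1)
      + 2 * PiInt β (Ioc 0 1) (fun v => PsiE α β t θ φ 1 v - PsiE α β t θ φ 1 1)
      + PsiE α β t θ φ 1 1 := by
  have hab : 0 < α + β + 2 := by linarith
  have hz := cosh_pos (t / 2)
  have hs : 0 ≤ sin (θ / 2) * sin (φ / 2) / cosh (t / 2) :=
    div_nonneg (mul_nonneg
      (sin_nonneg_of_nonneg_of_le_pi (by linarith [hθ.1]) (by linarith [hθ.1, hθ.2]))
      (sin_nonneg_of_nonneg_of_le_pi (by linarith [hφ.1]) (by linarith [hφ.1, hφ.2]))) hz.le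
  have hc : 0 ≤ cos (θ / 2) * cos (φ / 2) / cosh (t / 2) :=
    div_nonneg (mul_nonneg
      (cos_nonneg_of_neg_pi_div_two_le_of_le (by linarith [hθ.1, pi_pos]) (by linarith [hθ.2]))
      (cos_nonneg_of_neg_pi_div_two_le_of_le (by linarith [hφ.1, pi_pos]) (by linarith [hφ.2])))
      hz.le
  have hsc : sin (θ / 2) * sin (φ / 2) / cosh (t / 2) +
      cos (θ / 2) * cos (φ / 2) / cosh (t / 2) < 1 := by
    rw [← add_div, div_lt_one hz, add_comm, ← cos_sub]
    exact (cos_le_one _).trans_lt (one_lt_cosh.2 (by positivity))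
  have h := hasSum_PiInt_PiInt hα hβ ?_ fun u hu v hv =>
    hasSum_PsiE (α := α) (β := β) hab hs hc hsc hu hv
  · rw [← h.tsum_eq, Hker, F4, ← tsum_mul_left]
    congr 1
    funext p
    rw [show (α + β + 3) / 2 = (α + β + 2 + 1) / 2 by ring,
      ← doubleBinomialCoeff_even_mul_PiMoment, ← pow_mul, ← pow_mul]
    ring
  · refine ((summable_doubleBinomialCoeff_even_mul hab hs hc hsc).mul_left
      |cab α β * sinh (t / 2) / cosh (t / 2) ^ (α + β + 2)|).congr fun p => ?_
    have := doubleBinomialCoeff_nonneg hab (2 * p.1, 2 * p.2)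
    rw [abs_mul, abs_of_nonneg (a := doubleBinomialCoeff _ _ * _ * _) (by positivity)]
    ring
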